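/- For every natural number ℓ ≥ 1 there exists a family c : Fin (2^ℓ) → (Fin (2^{ℓ+1}) → ℝ) with every entry c i t ∈ {0, 1} such that the normalized vectors b i = 2^{−ℓ/2} • c i satisfy: (1) ‖b i‖ = 1 for all i; (2) ⟪b i, b j⟫ = 1/2 for all i ≠ j; and (3) ⟪b i, 2^{−ℓ/2} • (𝟙 − c j)⟫ = 1/2 for all i ≠ j, where 𝟙 denotes the all-ones vector in Fin (2^{ℓ+1}) → ℝ. -/

import Mathlib

/-- Sign vectors: Sylvester-Hadamard rows `(H, -H)`. -/
lemma exists_sign_aux (ℓ : ℕ) :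
    ∃ s : (Fin ℓ → Bool) → ((Fin ℓ → Bool) × Bool → ℝ),
      (∀ i t, s i t = 1 ∨ s i t = -1) ∧ (∀ i, ∑ t, s i t = 0) ∧
      (∀ i j, i ≠ j → ∑ t, s i t * s j t = 0) := by
  let h : Bool → Bool → ℝ := fun a b => if (a && b) = true then -1 else 1
  refine ⟨fun x t => (if t.2 = true then -1 else 1) * ∏ k, h (x k) (t.1 k), ?_, ?_, ?_⟩
  · intro x t
    have hp : (∏ k, h (x k) (t.1 k)) = 1 ∨ (∏ k, h (x k) (t.1 k)) = -1 := by
      apply Finset.prod_induction (fun k => h (x k) (t.1 k)) (fun r : ℝ => r = 1 ∨ r = -1)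
      · rintro a b (rfl | rfl) (rfl | rfl) <;> norm_num
      · left; rfl
      · intro k _
        dsimp only [h]
        split_ifs <;> simp
    rcases hp with hp | hp <;> dsimp only <;> rw [hp] <;> split_ifs <;> simp
  · intro x
    rw [Fintype.sum_prod_type]
    simp
  · intro x y hxy
    obtain ⟨k, hk⟩ := Function.ne_iff.mp hxy
    have key : ∑ t : Fin ℓ → Bool, ∏ k, (h (x k) (t k) * h (y k) (t k)) = 0 := by
      rw [← Fintype.prod_sum (fun k b => h (x k) b * h (y k) b)]
      apply Finset.prod_eq_zero (Finset.mem_univ k)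
      revert hk
      cases x k <;> cases y k <;> simp [h]
    rw [Fintype.sum_prod_type]
    simp only [Finset.prod_mul_distrib] at key
    simp only [Fintype.sum_bool]
    rw [← mul_zero (2 : ℝ), ← key, Finset.mul_sum]
    apply Finset.sum_congr rfl
    intro t _
    simp
    ring

lemma exists_sign (ℓ : ℕ) :
    ∃ s : Fin (2 ^ ℓ) → (Fin (2 ^ (ℓ + 1)) → ℝ),
      (∀ i t, s i t = 1 ∨ s i t = -1) ∧ (∀ i, ∑ t, s i t = 0) ∧
      (∀ i j, i ≠ j → ∑ t, s i t * s j t = 0) := by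
  obtain ⟨s, h1, h2, h3⟩ := exists_sign_aux ℓ
  let e : Fin (2 ^ ℓ) ≃ (Fin ℓ → Bool) := Fintype.equivOfCardEq (by simp)
  let f : Fin (2 ^ (ℓ + 1)) ≃ (Fin ℓ → Bool) × Bool :=
    Fintype.equivOfCardEq (by simp [pow_succ])
  refine ⟨fun i t => s (e i) (f t), fun i t => h1 _ _, fun i => ?_, fun i j hij => ?_⟩
  · rw [← h2 (e i)]
    exact f.sum_comp (s (e i))
  · rw [← h3 (e i) (e j) (e.injective.ne hij)]
    exact f.sum_comp (fun t => s (e i) t * s (e j) t)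

/-- The normalized gadget: for every `ℓ ≥ 1` there is a family of `2^ℓ` binary vectors `c i`
of dimension `2^(ℓ+1)` whose normalizations `b i = 2^(-ℓ/2) • c i` are unit vectors with all
pairwise dot products equal to `1/2`, and whose dot products with the normalized binary
complements `2^(-ℓ/2) • (𝟙 - c j)` of the other vectors also equal `1/2`. -/
theorem exists_normalized_gadget (ℓ : ℕ) (hℓ : 1 ≤ ℓ) :
    ∃ c : Fin (2 ^ ℓ) → (Fin (2 ^ (ℓ + 1)) → ℝ),
      (∀ i t, c i t = 0 ∨ c i t = 1) ∧
      (∀ i, Real.sqrt (∑ t, ((2 : ℝ) ^ (-(ℓ : ℝ) / 2) • c i) t ^ 2) = 1) ∧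
      (∀ i j, i ≠ j →
        ∑ t, ((2 : ℝ) ^ (-(ℓ : ℝ) / 2) • c i) t * ((2 : ℝ) ^ (-(ℓ : ℝ) / 2) • c j) t
          = 1 / 2) ∧
      (∀ i j, i ≠ j →
        ∑ t, ((2 : ℝ) ^ (-(ℓ : ℝ) / 2) • c i) t *
            ((2 : ℝ) ^ (-(ℓ : ℝ) / 2) • (((fun _ => (1 : ℝ)) : Fin (2 ^ (ℓ + 1)) → ℝ) - c j)) t
          = 1 / 2) := by
  obtain ⟨s, h1, h2, h3⟩ := exists_sign ℓ
  have hr : (2 : ℝ) ^ (-(ℓ : ℝ) / 2) * (2 : ℝ) ^ (-(ℓ : ℝ) / 2) = ((2 : ℝ) ^ ℓ)⁻¹ := by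
    rw [← Real.rpow_add (by norm_num), add_halves, Real.rpow_neg (by norm_num),
      Real.rpow_natCast]
  have hp : (2 : ℝ) ^ ℓ ≠ 0 := by positivity
  generalize (2 : ℝ) ^ (-(ℓ : ℝ) / 2) = r at hr
  refine ⟨fun i t => (1 + s i t) / 2, ?_, ?_, ?_, ?_⟩
  · intro i t
    rcases h1 i t with h | h <;> simp [h]
  · intro i
    rw [Real.sqrt_eq_one]
    have : ∀ t, (r • fun t => (1 + s i t) / 2) t ^ 2 = (r * r) * (1 / 2) + (r * r / 2) * s i t := by
      intro t
      simp only [Pi.smul_apply, smul_eq_mul]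
      rcases h1 i t with h | h <;> rw [h] <;> ring
    rw [Finset.sum_congr rfl (fun t _ => this t)]
    simp only [Finset.sum_add_distrib, ← Finset.mul_sum, h2, hr]
    simp [pow_succ]
  · intro i j hij
    have : ∀ t, (r • fun t => (1 + s i t) / 2) t * (r • fun t => (1 + s j t) / 2) t
        = (r * r) * (1 / 4) + (r * r / 4) * s i t + (r * r / 4) * s j t
          + (r * r / 4) * (s i t * s j t) := by
      intro t
      simp only [Pi.smul_apply, smul_eq_mul]
      ring
    rw [Finset.sum_congr rfl (fun t _ => this t)]
    simp only [Finset.sum_add_distrib, ← Finset.mul_sum, h2, h3 i j hij, hr]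
    simp [pow_succ]
    field_simp
    norm_num
  · intro i j hij
    have : ∀ t, (r • fun t => (1 + s i t) / 2) t *
        (r • (((fun _ => (1 : ℝ)) : Fin (2 ^ (ℓ + 1)) → ℝ) - fun t => (1 + s j t) / 2)) t
        = (r * r) * (1 / 4) + (r * r / 4) * s i t + (-(r * r / 4)) * s j t
          + (-(r * r / 4)) * (s i t * s j t) := by
      intro t
      simp only [Pi.smul_apply, Pi.sub_apply, smul_eq_mul]
      ring
    rw [Finset.sum_congr rfl (fun t _ => this t)]
    simp only [Finset.sum_add_distrib, ← Finset.mul_sum, h2, h3 i j hij, hr]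
    simp [pow_succ]
    field_simp
    norm_num
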